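/- Let $(X,\mu)$ and $(Y,\nu)$ be $\sigma$-finite measure spaces, $S\ge 1$, and let $w_1,\dots,w_S>0$ with $\sum_{s=1}^S w_s=1$. Let $\mathcal S_1,\dots,\mathcal S_S\subseteq Y\times X$ be measurable (the strata), let $f(y|x;\theta)\ge 0$ be a family of functions that are measurable in $(y,x)$ for each value of the parameter $\theta$, and put $Q_{s|X}(x;\theta)=\int f(y|x;\theta)\,1_{(y,x)\in\mathcal S_s}\,d\nu(y)$ (if this is infinite, use the conventions $0\cdot\infty=0$ and $a/\infty=0$ for $a\in[0,\infty]$). Let $\theta_0$ be a value of the parameter (the true one) and $g_0\ge 0$ a measurable function on $X$ (the true density) with $$Q_s(\theta_0,g_0)=\int Q_{s|X}(x;\theta_0)\,g_0(x)\,d\mu(x)\in(0,\infty)\qquad(s=1,\dots,S).$$ Let $E_{s,0}$ denote expectation for the probability density $f(y|x;\theta_0)1_{(y,x)\in\mathcal S_s}g_0(x)/Q_s(\theta_0,g_0)$ with respect to $\nu\otimes\mu$, and let $f^*_0(x)=\sum_{s=1}^S w_s\,Q_{s|X}(x;\theta_0)g_0(x)/Q_s(\theta_0,g_0)$. For a parameter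 value $\theta$ and $q=(q_1,\dots,q_{S-1},1)$ with all $q_j>0$ let $$\hat g_{\theta,q}(x)=\frac{f^*_0(x)}{\sum_{s'=1}^S w_{s'}Q_{s'|X}(x;\theta)/q_{s'}},\qquad p^*_s(y,x;\theta,q)=\frac{f(y|x;\theta)\,1_{(y,x)\in\mathcal S_s}\,\hat g_{\theta,q}(x)}{q_s}.$$ Fix $\theta$ and such a $q$, and assume that $\sum_{s'=1}^S w_{s'}Q_{s'|X}(x;\theta)/q_{s'}>0$ for all $x$ and that $E_{s,0}|\log p^*_s(Y,X;\theta,q)|<\infty$ for every $s$, where $\log 0=-\infty$, $\log\infty=\infty$ and $|\pm\infty|=\infty$. Then $E_{s,0}|\log p^*_s(Y,X;\theta,q')|<\infty$ for every $s$ and every $q'=(q'_1,\dots,q'_{S-1},1)$ with all $q'_j>0$; and for each $j=1,\dots,S-1$ the integral $\int Q_{j|X}(x;\theta)\hat g_{\theta,q}(x)\,d\mu(x)$ is finite, and the partial derivative at $q$ exists and equals $$\frac{\partial}{\partial q_j}\sum_{s=1}^S w_s\,E_{s,0}[\log p^*_s(Y,X;\theta,q)]=\frac{w_j}{q_j^2}\left(\int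 Q_{j|X}(x;\theta)\,\hat g_{\theta,q}(x)\,d\mu(x)-q_j\right).$$ In particular, it vanishes if $\int Q_{j|X}(x;\theta)\,\hat g_{\theta,q}(x)\,d\mu(x)=q_j$; hence all these partial derivatives vanish at any $q$ for which this holds for $j=1,\dots,S-1$. -/

import Mathlib

open MeasureTheory
open scoped NNReal ENNReal

noncomputable section

namespace StratifiedSampling

variable {X Y : Type*} [MeasurableSpace X] [MeasurableSpace Y]

/-- `Q_{s|X}(x) = ∫ f(y|x) 1_{(y,x) ∈ A} dν(y)`, where `A` is the stratum. -/
def condProb (ν : Measure Y) (A : Set (Y × X)) (f : Y → X → ℝ≥0) (x : X) : ℝ≥0∞ :=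
  ∫⁻ y, (f y x : ℝ≥0∞) * A.indicator 1 (y, x) ∂ν

/-- `Q_s(f, g) = ∫ Q_{s|X}(x) g(x) dμ(x)`. -/
def prob (μ : Measure X) (ν : Measure Y) (A : Set (Y × X)) (f : Y → X → ℝ≥0) (g : X → ℝ≥0) :
    ℝ≥0∞ :=
  ∫⁻ x, condProb ν A f x * g x ∂μ

/-- The distribution of `(Y, X)` given the stratum `A`: it has density
`f(y|x) 1_{(y,x) ∈ A} g(x) / Q_s(f, g)` with respect to `ν ⊗ μ`. -/
def law (μ : Measure X) (ν : Measure Y) (A : Set (Y × X)) (f : Y → X → ℝ≥0) (g : X → ℝ≥0) :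
    Measure (Y × X) :=
  (ν.prod μ).withDensity fun z =>
    (f z.1 z.2 : ℝ≥0∞) * A.indicator 1 z * g z.2 / prob μ ν A f g

/-- `f*₀(x) = ∑ s, w_s Q_{s|X}(x) g(x) / Q_s(f, g)`. -/
def mixDensity {S : ℕ} (μ : Measure X) (ν : Measure Y) (w : Fin S → ℝ≥0)
    (A : Fin S → Set (Y × X)) (f : Y → X → ℝ≥0) (g : X → ℝ≥0) (x : X) : ℝ≥0∞ :=
  ∑ s, (w s : ℝ≥0∞) * condProb ν (A s) f x * g x / prob μ ν (A s) f g

/-- `∑ s, w_s Q_{s|X}(x) / q_s`. -/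
def denom {S : ℕ} (ν : Measure Y) (w : Fin S → ℝ≥0) (A : Fin S → Set (Y × X))
    (f : Y → X → ℝ≥0) (q : Fin S → ℝ) (x : X) : ℝ≥0∞ :=
  ∑ s, (w s : ℝ≥0∞) * condProb ν (A s) f x / ENNReal.ofReal (q s)

/-- `ĝ_{θ,q}(x) = f*₀(x) / ∑ s, w_s Q_{s|X}(x; θ) / q_s`, with `f = f(·|·; θ)`,
`f₀ = f(·|·; θ₀)`. -/
def gHat {S : ℕ} (μ : Measure X) (ν : Measure Y) (w : Fin S → ℝ≥0) (A : Fin S → Set (Y × X))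
    (f f₀ : Y → X → ℝ≥0) (g₀ : X → ℝ≥0) (q : Fin S → ℝ) (x : X) : ℝ≥0∞ :=
  mixDensity μ ν w A f₀ g₀ x / denom ν w A f q x

/-- `p*_s(y, x; θ, q) = f(y|x; θ) 1_{(y,x) ∈ 𝒮_s} ĝ_{θ,q}(x) / q_s`. -/
def pStar {S : ℕ} (μ : Measure X) (ν : Measure Y) (w : Fin S → ℝ≥0) (A : Fin S → Set (Y × X))
    (f f₀ : Y → X → ℝ≥0) (g₀ : X → ℝ≥0) (q : Fin S → ℝ) (s : Fin S) (z : Y × X) : ℝ≥0∞ :=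
  (f z.1 z.2 : ℝ≥0∞) * (A s).indicator 1 z * gHat μ ν w A f f₀ g₀ q z.2 / ENNReal.ofReal (q s)

/-- `E|log p| < ∞` under `P`, where `log` is extended-real valued: `log 0 = -∞` and
`|±∞| = ∞`. In particular it forces `0 < p < ∞` almost surely. -/
def FiniteLogMean {Ω : Type*} [MeasurableSpace Ω] (P : Measure Ω) (p : Ω → ℝ≥0∞) : Prop :=
  ∫⁻ z, (ENNReal.log (p z)).abs ∂P < ∞

/-- `E[log p]` under `P`; meaningful when `FiniteLogMean P p` holds, in which case `log p` is
almost surely real. -/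
def logMean {Ω : Type*} [MeasurableSpace Ω] (P : Measure Ω) (p : Ω → ℝ≥0∞) : ℝ :=
  ∫ z, (ENNReal.log (p z)).toReal ∂P

/-- The vector `(q_1, …, q_{S-1}, 1)`, with `S = n + 1`. -/
def withOne {n : ℕ} (q : Fin n → ℝ) : Fin (n + 1) → ℝ :=
  Fin.snoc (α := fun _ => ℝ) q 1

/-- `∑ s, w_s E_{s,0}[log p*_s(Y, X; θ, q)]` as a function of `(q_1, …, q_{S-1})`. -/
def expectedLogLik {n : ℕ} (μ : Measure X) (ν : Measure Y) (w : Fin (n + 1) → ℝ≥0)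
    (A : Fin (n + 1) → Set (Y × X)) (f f₀ : Y → X → ℝ≥0) (g₀ : X → ℝ≥0) (q : Fin n → ℝ) : ℝ :=
  ∑ s, (w s : ℝ) *
    logMean (law μ ν (A s) f₀ g₀) (pStar μ ν w A f f₀ g₀ (withOne q) s)

end StratifiedSampling

end

open StratifiedSampling

open MeasureTheory Filter Topology
open scoped NNReal ENNReal

namespace StratifiedSampling

variable {X Y Ω : Type*} [MeasurableSpace Y] [MeasurableSpace Ω]

lemma toReal_log (p : ℝ≥0∞) : (ENNReal.log p).toReal = Real.log p.toReal := by
  rcases eq_or_ne p 0 with rfl | h0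
  · simp
  rcases eq_or_ne p ∞ with rfl | h1
  · simp
  simp [ENNReal.log, h0, h1]

lemma abs_log_of_ne {p : ℝ≥0∞} (h0 : p ≠ 0) (h1 : p ≠ ∞) :
    (ENNReal.log p).abs = ‖Real.log p.toReal‖ₑ := by
  rw [ENNReal.log, if_neg h0, if_neg h1, EReal.abs_def, Real.enorm_eq_ofReal_abs]

lemma measurable_ereal_abs : Measurable EReal.abs := by
  refine EReal.measurable_of_measurable_real ?_
  simp only [EReal.abs_def]
  fun_prop

lemma finiteLogMean_iff {P : Measure Ω} {p : Ω → ℝ≥0∞} (hp : Measurable p) :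
    FiniteLogMean P p ↔
      (∀ᵐ z ∂P, p z ≠ 0 ∧ p z ≠ ∞) ∧ Integrable (fun z => Real.log (p z).toReal) P := by
  have hm : Measurable fun z => Real.log (p z).toReal := by fun_prop
  have hcongr : (∀ᵐ z ∂P, p z ≠ 0 ∧ p z ≠ ∞) →
      ∫⁻ z, (ENNReal.log (p z)).abs ∂P = ∫⁻ z, ‖Real.log (p z).toReal‖ₑ ∂P := fun h =>
    lintegral_congr_ae (h.mono fun z hz => abs_log_of_ne hz.1 hz.2)
  constructor
  · intro h
    have hae : ∀ᵐ z ∂P, p z ≠ 0 ∧ p z ≠ ∞ := by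
      filter_upwards [ae_lt_top
        (measurable_ereal_abs.comp (ENNReal.measurable_log.comp hp)) h.ne] with z hz
      constructor <;> intro h <;> simp [h] at hz
    exact ⟨hae, hm.aestronglyMeasurable, by rw [HasFiniteIntegral, ← hcongr hae]; exact h⟩
  · rintro ⟨hae, hi⟩
    rw [FiniteLogMean, hcongr hae]
    exact hi.2

lemma logMean_eq (P : Measure Ω) (p : Ω → ℝ≥0∞) :
    logMean P p = ∫ z, Real.log (p z).toReal ∂P := by
  simp only [logMean, toReal_log]

section Measurability

variable [MeasurableSpace X] {S : ℕ} {μ : Measure X} {ν : Measure Y} [SigmaFinite ν] {w : Fin S → ℝ≥0}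
  {f f₀ : Y → X → ℝ≥0} {g₀ : X → ℝ≥0}

lemma measurable_kernel {A : Set (Y × X)} (hA : MeasurableSet A)
    (hf : Measurable fun z : Y × X => f z.1 z.2) :
    Measurable fun z : Y × X => (f z.1 z.2 : ℝ≥0∞) * A.indicator 1 z :=
  hf.coe_nnreal_ennreal.mul (measurable_one.indicator hA)

lemma measurable_condProb {A : Set (Y × X)} (hA : MeasurableSet A)
    (hf : Measurable fun z : Y × X => f z.1 z.2) : Measurable (condProb ν A f) :=
  (measurable_kernel hA hf).lintegral_prod_left'

variable {A : Fin S → Set (Y × X)}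

lemma measurable_denom (hA : ∀ s, MeasurableSet (A s))
    (hf : Measurable fun z : Y × X => f z.1 z.2) (q : Fin S → ℝ) :
    Measurable (denom ν w A f q) :=
  Finset.measurable_sum _ fun s _ =>
    ((measurable_condProb (hA s) hf).const_mul _).div_const _

lemma measurable_mixDensity (hA : ∀ s, MeasurableSet (A s))
    (hf₀ : Measurable fun z : Y × X => f₀ z.1 z.2) (hg₀ : Measurable g₀) :
    Measurable (mixDensity μ ν w A f₀ g₀) :=
  Finset.measurable_sum _ fun s _ =>
    (((measurable_condProb (hA s) hf₀).const_mul _).mul hg₀.coe_nnreal_ennreal).div_const _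

lemma measurable_pStar (hA : ∀ s, MeasurableSet (A s))
    (hf : Measurable fun z : Y × X => f z.1 z.2)
    (hf₀ : Measurable fun z : Y × X => f₀ z.1 z.2) (hg₀ : Measurable g₀)
    (q : Fin S → ℝ) (s : Fin S) : Measurable (pStar μ ν w A f f₀ g₀ q s) :=
  ((measurable_kernel (hA s) hf).mul
    (((measurable_mixDensity hA hf₀ hg₀).div (measurable_denom hA hf q)).comp
      measurable_snd)).div_const _

end Measurability

section Law

variable [MeasurableSpace X] {μ : Measure X} {ν : Measure Y} [SigmaFinite μ] [SigmaFinite ν]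
  {f : Y → X → ℝ≥0} {g : X → ℝ≥0}

lemma lintegral_snd_law {A : Set (Y × X)} (hA : MeasurableSet A)
    (hf : Measurable fun z : Y × X => f z.1 z.2) (hg : Measurable g)
    {h : X → ℝ≥0∞} (hh : Measurable h) :
    ∫⁻ z, h z.2 ∂law μ ν A f g =
      ∫⁻ x, condProb ν A f x * g x / prob μ ν A f g * h x ∂μ := by
  have hk := measurable_kernel hA hf
  have hd : Measurable fun z : Y × X =>
      (f z.1 z.2 : ℝ≥0∞) * A.indicator 1 z * g z.2 / prob μ ν A f g :=
    (hk.mul (hg.coe_nnreal_ennreal.comp measurable_snd)).div_const _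
  have hh' : Measurable fun z : Y × X => h z.2 := hh.comp measurable_snd
  rw [law, lintegral_withDensity_eq_lintegral_mul _ hd hh',
    lintegral_prod_symm _ (hd.mul hh').aemeasurable]
  refine lintegral_congr fun x => ?_
  have hkx : Measurable fun y => (f y x : ℝ≥0∞) * A.indicator 1 (y, x) :=
    hk.comp measurable_prodMk_right
  simp only [Pi.mul_apply, condProb, div_eq_mul_inv, mul_assoc]
  simp only [← mul_assoc ((f _ x : ℝ≥0∞))]
  rw [lintegral_mul_const _ hkx]

lemma isProbabilityMeasure_law {A : Set (Y × X)} (hA : MeasurableSet A)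
    (hf : Measurable fun z : Y × X => f z.1 z.2) (hg : Measurable g)
    (h0 : prob μ ν A f g ≠ 0) (h1 : prob μ ν A f g ≠ ∞) :
    IsProbabilityMeasure (law μ ν A f g) := by
  constructor
  have h := lintegral_snd_law (μ := μ) (ν := ν) hA hf hg (h := 1) measurable_one
  simp only [Pi.one_apply, lintegral_one, mul_one, div_eq_mul_inv] at h
  have hm : Measurable fun x => condProb ν A f x * g x :=
    (measurable_condProb hA hf).mul hg.coe_nnreal_ennreal
  rw [h, lintegral_mul_const _ hm]
  exact ENNReal.mul_inv_cancel h0 h1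

lemma sum_mul_lintegral_snd_law {S : ℕ} (w : Fin S → ℝ≥0) {A : Fin S → Set (Y × X)}
    (hA : ∀ s, MeasurableSet (A s)) (hf : Measurable fun z : Y × X => f z.1 z.2)
    (hg : Measurable g) {h : X → ℝ≥0∞} (hh : Measurable h) :
    ∑ s, (w s : ℝ≥0∞) * ∫⁻ z, h z.2 ∂law μ ν (A s) f g =
      ∫⁻ x, mixDensity μ ν w A f g x * h x ∂μ := by
  have hm : ∀ s, Measurable fun x =>
      condProb ν (A s) f x * g x / prob μ ν (A s) f g * h x := fun s =>
    (((measurable_condProb (hA s) hf).mul hg.coe_nnreal_ennreal).div_const _).mul hh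
  simp only [mixDensity, Finset.sum_mul]
  rw [lintegral_finsetSum _ fun s _ => ?_]
  · refine Finset.sum_congr rfl fun s _ => ?_
    rw [lintegral_snd_law (hA s) hf hg hh, ← lintegral_const_mul _ (hm s)]
    simp only [div_eq_mul_inv, mul_assoc]
  · have := (hm s).const_mul (w s : ℝ≥0∞)
    simpa only [div_eq_mul_inv, mul_assoc] using this

end Law

section Pointwise

variable {S : ℕ} {ν : Measure Y} {w : Fin S → ℝ≥0} {A : Fin S → Set (Y × X)}
  {f : Y → X → ℝ≥0} {q q' : Fin S → ℝ} {x : X}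

lemma condProb_ne_top_of_denom_ne_top (hw : ∀ s, 0 < w s) (h : denom ν w A f q x ≠ ∞)
    (s : Fin S) : condProb ν (A s) f x ≠ ∞ := by
  intro hs
  refine h (ENNReal.sum_eq_top.2 ⟨s, Finset.mem_univ s, ?_⟩)
  rw [hs, ENNReal.mul_top (by simpa using (hw s).ne'), ENNReal.top_div_of_ne_top
    ENNReal.ofReal_ne_top]

lemma toReal_denom (hQ : ∀ s, condProb ν (A s) f x ≠ ∞) (hq : ∀ s, 0 < q s) :
    (denom ν w A f q x).toReal = ∑ s, (w s : ℝ) * (condProb ν (A s) f x).toReal / q s := by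
  rw [denom, ENNReal.toReal_sum fun s _ =>
    ENNReal.div_ne_top (ENNReal.mul_ne_top ENNReal.coe_ne_top (hQ s)) (by simpa using hq s)]
  simp [ENNReal.toReal_div, ENNReal.toReal_ofReal (hq _).le]

lemma denom_ne_top (hQ : ∀ s, condProb ν (A s) f x ≠ ∞) (hq : ∀ s, 0 < q s) :
    denom ν w A f q x ≠ ∞ :=
  ENNReal.sum_ne_top.2 fun s _ =>
    ENNReal.div_ne_top (ENNReal.mul_ne_top ENNReal.coe_ne_top (hQ s)) (by simpa using hq s)

lemma denom_ne_zero (h : denom ν w A f q x ≠ 0) : denom ν w A f q' x ≠ 0 := by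
  contrapose! h
  simp only [denom, Finset.sum_eq_zero_iff, ENNReal.div_eq_zero_iff, ENNReal.ofReal_ne_top,
    or_false] at h ⊢
  exact h

lemma toReal_denom_le (hQ : ∀ s, condProb ν (A s) f x ≠ ∞) (hq : ∀ s, 0 < q s)
    (hq' : ∀ s, 0 < q' s) :
    (denom ν w A f q' x).toReal ≤ (∑ s, q s / q' s) * (denom ν w A f q x).toReal := by
  rw [toReal_denom hQ hq, toReal_denom hQ hq', Finset.mul_sum]
  refine Finset.sum_le_sum fun s _ => ?_
  have h1 : (w s : ℝ) * (condProb ν (A s) f x).toReal / q' s =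
      q s / q' s * ((w s : ℝ) * (condProb ν (A s) f x).toReal / q s) := by
    have := (hq s).ne'
    have := (hq' s).ne'
    field_simp
  rw [h1]
  refine mul_le_mul_of_nonneg_right ?_ (div_nonneg (by positivity) (hq s).le)
  exact Finset.single_le_sum (f := fun s => q s / q' s)
    (fun i _ => div_nonneg (hq i).le (hq' i).le) (Finset.mem_univ s)

lemma log_toReal_denom_sub_le (hQ : ∀ s, condProb ν (A s) f x ≠ ∞) (hq : ∀ s, 0 < q s)
    (hq' : ∀ s, 0 < q' s) (h : denom ν w A f q x ≠ 0) :
    Real.log (denom ν w A f q' x).toReal - Real.log (denom ν w A f q x).toReal ≤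
      Real.log (∑ s, q s / q' s) := by
  have hD := ENNReal.toReal_pos h (denom_ne_top hQ hq)
  have hD' := ENNReal.toReal_pos (denom_ne_zero (q' := q') h) (denom_ne_top hQ hq')
  rw [← Real.log_div hD'.ne' hD.ne']
  refine Real.log_le_log (div_pos hD' hD) ?_
  rw [div_le_iff₀ hD]
  exact toReal_denom_le hQ hq hq'

/-- `w_j Q_{j|X}(x) / ∑ s, w_s Q_{s|X}(x) / q_s`. -/
noncomputable def share (ν : Measure Y) (w : Fin S → ℝ≥0) (A : Fin S → Set (Y × X)) (f : Y → X → ℝ≥0)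
    (q : Fin S → ℝ) (j : Fin S) (x : X) : ℝ≥0∞ :=
  (w j : ℝ≥0∞) * condProb ν (A j) f x / denom ν w A f q x

lemma share_le {j : Fin S} (hq : 0 < q j) : share ν w A f q j x ≤ ENNReal.ofReal (q j) := by
  refine ENNReal.div_le_of_le_mul ?_
  have h : (w j : ℝ≥0∞) * condProb ν (A j) f x / ENNReal.ofReal (q j) ≤ denom ν w A f q x :=
    Finset.single_le_sum (f := fun s => (w s : ℝ≥0∞) * condProb ν (A s) f x /
      ENNReal.ofReal (q s)) (fun _ _ => zero_le) (Finset.mem_univ j)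
  rw [ENNReal.div_le_iff (by simpa using hq) ENNReal.ofReal_ne_top] at h
  exact h.trans_eq (mul_comm _ _)

lemma toReal_denom_update (hw : ∀ s, 0 < w s) (hq : ∀ s, 0 < q s) {j : Fin S} {c : ℝ}
    (hc : 0 < c) (h0 : denom ν w A f q x ≠ 0) (h1 : denom ν w A f q x ≠ ∞) :
    (denom ν w A f (Function.update q j c) x).toReal =
      (denom ν w A f q x).toReal *
        (1 + (share ν w A f q j x).toReal * (c⁻¹ - (q j)⁻¹)) := by
  have hQ := condProb_ne_top_of_denom_ne_top hw h1
  have hD := ENNReal.toReal_pos h0 h1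
  have hq' : ∀ s, 0 < Function.update q j c s := fun s => by
    rcases eq_or_ne s j with rfl | h <;> simp [*]
  have e : (share ν w A f q j x).toReal * (denom ν w A f q x).toReal =
      (w j : ℝ) * (condProb ν (A j) f x).toReal := by
    rw [share, ENNReal.toReal_div, div_mul_cancel₀ _ hD.ne']
    simp
  have key : (denom ν w A f (Function.update q j c) x).toReal - (denom ν w A f q x).toReal =
      (w j : ℝ) * (condProb ν (A j) f x).toReal * (c⁻¹ - (q j)⁻¹) := by
    rw [toReal_denom hQ hq, toReal_denom hQ hq', ← Finset.sum_sub_distrib,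
      Finset.sum_eq_single j]
    · simp only [Function.update_self]; ring
    · intro s _ hs; simp [hs]
    · simp
  rw [← e] at key
  linear_combination key

lemma lintegral_share_ne_top [MeasurableSpace X] {P : Measure (Y × X)} [IsFiniteMeasure P] {j : Fin S}
    (hq : 0 < q j) : ∫⁻ z, share ν w A f q j z.2 ∂P ≠ ∞ :=
  ne_top_of_le_ne_top (ENNReal.mul_ne_top ENNReal.ofReal_ne_top (measure_ne_top P Set.univ))
    ((lintegral_mono fun _ => share_le hq).trans_eq (lintegral_const _))

variable [MeasurableSpace X] {μ : Measure X} {f₀ : Y → X → ℝ≥0} {g₀ : X → ℝ≥0}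

lemma denom_ne_top_of_pStar_ne_zero {s : Fin S} {z : Y × X}
    (hp : pStar μ ν w A f f₀ g₀ q s z ≠ 0) : denom ν w A f q z.2 ≠ ∞ := by
  intro h
  simp [pStar, gHat, h] at hp

lemma pStar_eq (hq : ∀ s, 0 < q s) {s : Fin S} {z : Y × X}
    (h0 : denom ν w A f q z.2 ≠ 0) (h1 : denom ν w A f q z.2 ≠ ∞) :
    pStar μ ν w A f f₀ g₀ q' s z = pStar μ ν w A f f₀ g₀ q s z *
      (denom ν w A f q z.2 / denom ν w A f q' z.2) *
        (ENNReal.ofReal (q s) / ENNReal.ofReal (q' s)) := by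
  have e1 : (denom ν w A f q z.2)⁻¹ * denom ν w A f q z.2 = 1 := ENNReal.inv_mul_cancel h0 h1
  have e2 : (ENNReal.ofReal (q s))⁻¹ * ENNReal.ofReal (q s) = 1 :=
    ENNReal.inv_mul_cancel (by simpa using hq s) ENNReal.ofReal_ne_top
  simp only [pStar, gHat, div_eq_mul_inv]
  generalize (f z.1 z.2 : ℝ≥0∞) * (A s).indicator 1 z = k
  generalize (denom ν w A f q' z.2)⁻¹ = d'
  generalize (ENNReal.ofReal (q' s))⁻¹ = r'
  generalize (denom ν w A f q z.2)⁻¹ = di at *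
  generalize (ENNReal.ofReal (q s))⁻¹ = ri at *
  calc _ = k * (mixDensity μ ν w A f₀ g₀ z.2 * d') * r' * (di * denom ν w A f q z.2) *
        (ri * ENNReal.ofReal (q s)) := by rw [e1, e2, mul_one, mul_one]
    _ = _ := by ring

lemma pStar_ne_zero_and_ne_top (hw : ∀ s, 0 < w s) (hq : ∀ s, 0 < q s)
    (hq' : ∀ s, 0 < q' s) {s : Fin S} {z : Y × X} (h0 : denom ν w A f q z.2 ≠ 0)
    (hp : pStar μ ν w A f f₀ g₀ q s z ≠ 0 ∧ pStar μ ν w A f f₀ g₀ q s z ≠ ∞) :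
    pStar μ ν w A f f₀ g₀ q' s z ≠ 0 ∧ pStar μ ν w A f f₀ g₀ q' s z ≠ ∞ := by
  have h1 := denom_ne_top_of_pStar_ne_zero hp.1
  have hQ := condProb_ne_top_of_denom_ne_top hw h1
  have h0' := denom_ne_zero (q' := q') h0
  have h1' : denom ν w A f q' z.2 ≠ ∞ := denom_ne_top hQ hq'
  have e : ENNReal.ofReal (q s) ≠ 0 := by simpa using hq s
  have e' : ENNReal.ofReal (q' s) ≠ 0 := by simpa using hq' s
  rw [pStar_eq hq h0 h1]
  exact ⟨mul_ne_zero (mul_ne_zero hp.1 (ENNReal.div_ne_zero.2 ⟨h0, h1'⟩))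
      (ENNReal.div_ne_zero.2 ⟨e, ENNReal.ofReal_ne_top⟩),
    ENNReal.mul_ne_top (ENNReal.mul_ne_top hp.2 (ENNReal.div_ne_top h1 h0'))
      (ENNReal.div_ne_top ENNReal.ofReal_ne_top e')⟩

lemma log_toReal_pStar (hw : ∀ s, 0 < w s) (hq : ∀ s, 0 < q s)
    (hq' : ∀ s, 0 < q' s) {s : Fin S} {z : Y × X} (h0 : denom ν w A f q z.2 ≠ 0)
    (hp : pStar μ ν w A f f₀ g₀ q s z ≠ 0 ∧ pStar μ ν w A f f₀ g₀ q s z ≠ ∞) :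
    Real.log (pStar μ ν w A f f₀ g₀ q' s z).toReal =
      Real.log (pStar μ ν w A f f₀ g₀ q s z).toReal -
        (Real.log (denom ν w A f q' z.2).toReal - Real.log (denom ν w A f q z.2).toReal) +
        (Real.log (q s) - Real.log (q' s)) := by
  have h1 := denom_ne_top_of_pStar_ne_zero hp.1
  have hQ := condProb_ne_top_of_denom_ne_top hw h1
  have hD := ENNReal.toReal_pos h0 h1
  have hD' := ENNReal.toReal_pos (denom_ne_zero (q' := q') h0) (denom_ne_top hQ hq')
  have hP := ENNReal.toReal_pos hp.1 hp.2
  rw [pStar_eq hq h0 h1, ENNReal.toReal_mul, ENNReal.toReal_mul, ENNReal.toReal_div,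
    ENNReal.toReal_div, ENNReal.toReal_ofReal (hq s).le, ENNReal.toReal_ofReal (hq' s).le,
    Real.log_mul (by positivity) (div_pos (hq s) (hq' s)).ne',
    Real.log_mul hP.ne' (by positivity), Real.log_div hD.ne' hD'.ne',
    Real.log_div (hq s).ne' (hq' s).ne']
  ring

end Pointwise

lemma hasDerivAt_integral_log_one_add {P : Measure Ω} [IsFiniteMeasure P] {a : Ω → ℝ}
    (ha : Measurable a) {b : ℝ} (hb : 0 < b) (h0 : ∀ z, 0 ≤ a z) (hab : ∀ z, a z ≤ b) :
    HasDerivAt (fun c : ℝ => ∫ z, Real.log (1 + a z * (c⁻¹ - b⁻¹)) ∂P)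
      (-(∫ z, a z ∂P) / b ^ 2) b := by
  have hpos : ∀ z, ∀ c ∈ Set.Ioo (b / 2) (2 * b), 1 / 2 ≤ 1 + a z * (c⁻¹ - b⁻¹) := by
    intro z c hc
    have hc0 : 0 < c := by linarith [hc.1]
    have h2 : (2 * b)⁻¹ ≤ c⁻¹ := inv_anti₀ hc0 hc.2.le
    have h3 : a z * b⁻¹ ≤ 1 := by
      rw [← div_eq_mul_inv, div_le_one hb]; exact hab z
    have h4 : a z * (2 * b)⁻¹ ≤ a z * c⁻¹ := mul_le_mul_of_nonneg_left h2 (h0 z)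
    rw [mul_inv] at h4
    linarith
  have := hasDerivAt_integral_of_dominated_loc_of_deriv_le (μ := P) (𝕜 := ℝ)
    (F := fun c z => Real.log (1 + a z * (c⁻¹ - b⁻¹)))
    (F' := fun c z => a z * (-(c ^ 2)⁻¹) / (1 + a z * (c⁻¹ - b⁻¹)))
    (x₀ := b) (s := Set.Ioo (b / 2) (2 * b)) (bound := fun _ => b * ((b / 2) ^ 2)⁻¹ / (1 / 2))
    (Ioo_mem_nhds (by linarith) (by linarith))
    (Eventually.of_forall fun c => by
      exact (by fun_prop : Measurable fun z => Real.log (1 + a z * (c⁻¹ - b⁻¹))).aestronglyMeasurable)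
    (by simp)
    (by exact (by fun_prop : Measurable fun z =>
      a z * (-(b ^ 2)⁻¹) / (1 + a z * (b⁻¹ - b⁻¹))).aestronglyMeasurable)
    (Eventually.of_forall fun z c hc => ?_) (integrable_const _)
    (Eventually.of_forall fun z c hc => ?_)
  · refine this.2.congr_deriv ?_
    simp only [sub_self, mul_zero, add_zero, div_one]
    rw [integral_mul_const]
    ring
  · have h1 := hpos z c hc
    have hc0 : 0 < c := by linarith [hc.1]
    rw [norm_div, norm_mul, norm_neg, Real.norm_of_nonneg (h0 z),
      Real.norm_of_nonneg (by positivity : 0 ≤ (c ^ 2)⁻¹), Real.norm_of_nonneg (by linarith)]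
    have h2 := hab z
    have h3 := hc.1.le
    gcongr
  · have h1 := hpos z c hc
    have hc0 : 0 < c := by linarith [hc.1]
    exact (((hasDerivAt_inv hc0.ne').sub_const _).const_mul (a z)).const_add 1 |>.log
      (by linarith)

section Main

variable [MeasurableSpace X] {S : ℕ} {μ : Measure X} {ν : Measure Y} [SigmaFinite ν]
  {w : Fin S → ℝ≥0} {A : Fin S → Set (Y × X)} {f f₀ : Y → X → ℝ≥0} {g₀ : X → ℝ≥0}
  {q q' : Fin S → ℝ}

lemma FiniteLogMean.change_param {P : Measure (Y × X)} [IsFiniteMeasure P]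
    (hw : ∀ s, 0 < w s) (hA : ∀ s, MeasurableSet (A s))
    (hf : Measurable fun z : Y × X => f z.1 z.2)
    (hf₀ : Measurable fun z : Y × X => f₀ z.1 z.2) (hg₀ : Measurable g₀)
    (hq : ∀ s, 0 < q s) (hq' : ∀ s, 0 < q' s) (hden : ∀ x, 0 < denom ν w A f q x) {s : Fin S}
    (h : FiniteLogMean P (pStar μ ν w A f f₀ g₀ q s)) :
    FiniteLogMean P (pStar μ ν w A f f₀ g₀ q' s) := by
  rw [finiteLogMean_iff (measurable_pStar hA hf hf₀ hg₀ _ _)] at h ⊢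
  obtain ⟨hp, hi⟩ := h
  refine ⟨hp.mono fun z hz => pStar_ne_zero_and_ne_top hw hq hq' (hden z.2).ne' hz, ?_⟩
  have hm : ∀ r : Fin S → ℝ, Measurable fun z : Y × X =>
      Real.log (denom ν w A f r z.2).toReal := fun r =>
    ((measurable_denom hA hf r).comp measurable_snd).ennreal_toReal.log
  have hbdd : Integrable (fun z : Y × X => Real.log (denom ν w A f q' z.2).toReal -
      Real.log (denom ν w A f q z.2).toReal) P := by
    refine Integrable.of_bound ((hm q').sub (hm q)).aestronglyMeasurable
      (max (Real.log (∑ s, q s / q' s)) (Real.log (∑ s, q' s / q s))) ?_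
    filter_upwards [hp] with z hz
    have h1 := denom_ne_top_of_pStar_ne_zero hz.1
    have hQ := condProb_ne_top_of_denom_ne_top hw h1
    have h0 := (hden z.2).ne'
    rw [Real.norm_eq_abs, abs_le]
    have e1 := log_toReal_denom_sub_le hQ hq hq' h0
    have e2 := log_toReal_denom_sub_le hQ hq' hq (denom_ne_zero h0)
    exact ⟨by linarith [le_max_right (Real.log (∑ s, q s / q' s)) (Real.log (∑ s, q' s / q s))],
      e1.trans (le_max_left _ _)⟩
  refine ((hi.sub hbdd).add (integrable_const (Real.log (q s) - Real.log (q' s)))).congr ?_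
  filter_upwards [hp] with z hz
  exact (log_toReal_pStar hw hq hq' (hden z.2).ne' hz).symm

lemma measurable_share (hA : ∀ s, MeasurableSet (A s))
    (hf : Measurable fun z : Y × X => f z.1 z.2) (q : Fin S → ℝ) (j : Fin S) :
    Measurable (share ν w A f q j) :=
  ((measurable_condProb (hA j) hf).const_mul _).div (measurable_denom hA hf q)

lemma sum_mul_lintegral_share [SigmaFinite μ] (hA : ∀ s, MeasurableSet (A s))
    (hf : Measurable fun z : Y × X => f z.1 z.2)
    (hf₀ : Measurable fun z : Y × X => f₀ z.1 z.2) (hg₀ : Measurable g₀) (j : Fin S) :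
    ∑ s, (w s : ℝ≥0∞) * ∫⁻ z, share ν w A f q j z.2 ∂law μ ν (A s) f₀ g₀ =
      w j * ∫⁻ x, condProb ν (A j) f x * gHat μ ν w A f f₀ g₀ q x ∂μ := by
  have hm : Measurable fun x => condProb ν (A j) f x * gHat μ ν w A f f₀ g₀ q x :=
    (measurable_condProb (hA j) hf).mul
      ((measurable_mixDensity hA hf₀ hg₀).div (measurable_denom hA hf q))
  rw [sum_mul_lintegral_snd_law w hA hf₀ hg₀ (measurable_share hA hf q j),
    ← lintegral_const_mul _ hm]
  refine lintegral_congr fun x => ?_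
  simp only [share, gHat, div_eq_mul_inv]
  ring

lemma hasDerivAt_logMean_pStar {P : Measure (Y × X)} [IsProbabilityMeasure P]
    (hw : ∀ s, 0 < w s) (hA : ∀ s, MeasurableSet (A s))
    (hf : Measurable fun z : Y × X => f z.1 z.2)
    (hf₀ : Measurable fun z : Y × X => f₀ z.1 z.2) (hg₀ : Measurable g₀)
    (hq : ∀ s, 0 < q s) (hden : ∀ x, 0 < denom ν w A f q x) {s : Fin S} (j : Fin S)
    (h : FiniteLogMean P (pStar μ ν w A f f₀ g₀ q s)) :
    HasDerivAt (fun c => logMean P (pStar μ ν w A f f₀ g₀ (Function.update q j c) s))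
      ((∫⁻ z, share ν w A f q j z.2 ∂P).toReal / q j ^ 2 - if s = j then (q j)⁻¹ else 0)
      (q j) := by
  obtain ⟨hp, hi⟩ := (finiteLogMean_iff (measurable_pStar hA hf hf₀ hg₀ _ _)).1 h
  have hms : Measurable fun z : Y × X => share ν w A f q j z.2 :=
    (measurable_share hA hf q j).comp measurable_snd
  have hle : ∀ z : Y × X, (share ν w A f q j z.2).toReal ≤ q j := fun z =>
    ENNReal.toReal_le_of_le_ofReal (hq j).le (share_le (hq j))
  have hint : ∫ z, (share ν w A f q j z.2).toReal ∂P =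
      (∫⁻ z, share ν w A f q j z.2 ∂P).toReal :=
    integral_toReal hms.aemeasurable (Eventually.of_forall fun z =>
      (share_le (hq j)).trans_lt ENNReal.ofReal_lt_top)
  have hG := hasDerivAt_integral_log_one_add (P := P) hms.ennreal_toReal (hq j)
    (fun _ => ENNReal.toReal_nonneg) hle
  rw [hint] at hG
  have hL : HasDerivAt (fun c => Real.log (Function.update q j c s))
      (if s = j then (q j)⁻¹ else 0) (q j) := by
    split_ifs with hs
    · subst hs
      simpa using Real.hasDerivAt_log (hq s).ne'
    · simpa [hs] using hasDerivAt_const (q j) (Real.log (q s))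
  have hsum := (hG.const_sub (∫ z, Real.log (pStar μ ν w A f f₀ g₀ q s z).toReal ∂P)).add
    (hL.const_sub (Real.log (q s)))
  have hev : (fun c => logMean P (pStar μ ν w A f f₀ g₀ (Function.update q j c) s)) =ᶠ[𝓝 (q j)]
      fun c => (∫ z, Real.log (pStar μ ν w A f f₀ g₀ q s z).toReal ∂P) -
        (∫ z, Real.log (1 + (share ν w A f q j z.2).toReal * (c⁻¹ - (q j)⁻¹)) ∂P) +
        (Real.log (q s) - Real.log (Function.update q j c s)) := by
    filter_upwards [lt_mem_nhds (hq j)] with c hc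
    have hq' : ∀ s, 0 < Function.update q j c s := fun s => by
      rcases eq_or_ne s j with rfl | h <;> simp [*]
    have hae : ∀ᵐ z ∂P,
        Real.log (pStar μ ν w A f f₀ g₀ (Function.update q j c) s z).toReal =
        Real.log (pStar μ ν w A f f₀ g₀ q s z).toReal -
          Real.log (1 + (share ν w A f q j z.2).toReal * (c⁻¹ - (q j)⁻¹)) +
          (Real.log (q s) - Real.log (Function.update q j c s)) := by
      filter_upwards [hp] with z hz
      have h0 := (hden z.2).ne'
      have h1 := denom_ne_top_of_pStar_ne_zero hz.1
      have hD := ENNReal.toReal_pos h0 h1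
      have hD' := ENNReal.toReal_pos (denom_ne_zero (q' := Function.update q j c) h0)
        (denom_ne_top (condProb_ne_top_of_denom_ne_top hw h1) hq')
      have hu := toReal_denom_update hw hq (j := j) hc h0 h1
      have hne : 1 + (share ν w A f q j z.2).toReal * (c⁻¹ - (q j)⁻¹) ≠ 0 := by
        intro h
        rw [hu, h, mul_zero] at hD'
        exact hD'.false
      rw [log_toReal_pStar hw hq hq' h0 hz, hu, Real.log_mul hD.ne' hne]
      ring
    have hi' := ((finiteLogMean_iff (measurable_pStar hA hf hf₀ hg₀ _ _)).1
      (h.change_param hw hA hf hf₀ hg₀ hq hq' hden)).2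
    have hlog : Integrable (fun z : Y × X =>
        Real.log (1 + (share ν w A f q j z.2).toReal * (c⁻¹ - (q j)⁻¹))) P := by
      refine ((hi.sub hi').add
        (integrable_const (Real.log (q s) - Real.log (Function.update q j c s)))).congr ?_
      filter_upwards [hae] with z hz
      simp only [Pi.add_apply, Pi.sub_apply, hz]
      ring
    have hsub : Integrable (fun z : Y × X => Real.log (pStar μ ν w A f f₀ g₀ q s z).toReal -
        Real.log (1 + (share ν w A f q j z.2).toReal * (c⁻¹ - (q j)⁻¹))) P := hi.sub hlog
    rw [logMean_eq, integral_congr_ae hae, integral_add hsub (integrable_const _),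
      integral_sub hi hlog]
    simp
  refine (hsum.congr_of_eventuallyEq hev).congr_deriv ?_
  ring

lemma hasDerivAt_sum_logMean_pStar [SigmaFinite μ] (hw : ∀ s, 0 < w s)
    (hA : ∀ s, MeasurableSet (A s))
    (hf : Measurable fun z : Y × X => f z.1 z.2)
    (hf₀ : Measurable fun z : Y × X => f₀ z.1 z.2) (hg₀ : Measurable g₀)
    (hQ₀ : ∀ s, prob μ ν (A s) f₀ g₀ ≠ 0 ∧ prob μ ν (A s) f₀ g₀ ≠ ∞)
    (hq : ∀ s, 0 < q s) (hden : ∀ x, 0 < denom ν w A f q x) (j : Fin S)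
    (h : ∀ s, FiniteLogMean (law μ ν (A s) f₀ g₀) (pStar μ ν w A f f₀ g₀ q s)) :
    (∫⁻ x, condProb ν (A j) f x * gHat μ ν w A f f₀ g₀ q x ∂μ) ≠ ∞ ∧
    HasDerivAt (fun c => ∑ s, (w s : ℝ) * logMean (law μ ν (A s) f₀ g₀)
        (pStar μ ν w A f f₀ g₀ (Function.update q j c) s))
      ((w j : ℝ) / q j ^ 2 *
        ((∫⁻ x, condProb ν (A j) f x * gHat μ ν w A f f₀ g₀ q x ∂μ).toReal - q j)) (q j) := by
  have hP : ∀ s, IsProbabilityMeasure (law μ ν (A s) f₀ g₀) := fun s =>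
    isProbabilityMeasure_law (hA s) hf₀ hg₀ (hQ₀ s).1 (hQ₀ s).2
  have hsh := sum_mul_lintegral_share (μ := μ) (ν := ν) (w := w) (q := q) hA hf hf₀ hg₀ j
  have hft : ∀ s, (w s : ℝ≥0∞) * ∫⁻ z, share ν w A f q j z.2 ∂law μ ν (A s) f₀ g₀ ≠ ∞ :=
    fun s => ENNReal.mul_ne_top ENNReal.coe_ne_top (lintegral_share_ne_top (hq j))
  have hfin : (∫⁻ x, condProb ν (A j) f x * gHat μ ν w A f f₀ g₀ q x ∂μ) ≠ ∞ := by
    intro htop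
    rw [htop, ENNReal.mul_top (by simpa using (hw j).ne')] at hsh
    exact ENNReal.sum_ne_top.2 (fun s _ => hft s) hsh
  refine ⟨hfin, ?_⟩
  have hR := congrArg ENNReal.toReal hsh
  rw [ENNReal.toReal_sum fun s _ => hft s] at hR
  simp only [ENNReal.toReal_mul, ENNReal.coe_toReal] at hR
  have hd := HasDerivAt.fun_sum (u := Finset.univ) fun s _ =>
    (hasDerivAt_logMean_pStar hw hA hf hf₀ hg₀ hq hden j (h s)).const_mul (w s : ℝ)
  refine hd.congr_deriv ?_
  have := (hq j).ne'
  simp only [mul_sub, Finset.sum_sub_distrib, mul_ite, mul_zero, Finset.sum_ite_eq',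
    Finset.mem_univ, if_true, ← mul_div_assoc]
  rw [← Finset.sum_div, hR]
  field_simp

end Main

lemma withOne_pos {n : ℕ} {q : Fin n → ℝ} (hq : ∀ j, 0 < q j) (s : Fin (n + 1)) :
    0 < withOne q s := by
  induction s using Fin.lastCases with
  | last => simp [withOne]
  | cast j => simpa [withOne] using hq j

end StratifiedSampling

theorem stmt_11 {X Y Θ : Type*} [MeasurableSpace X] [MeasurableSpace Y]
    (μ : Measure X) [SigmaFinite μ] (ν : Measure Y) [SigmaFinite ν]
    -- the number of strata is `S = n + 1`
    (n : ℕ) (w : Fin (n + 1) → ℝ≥0) (hw_pos : ∀ s, 0 < w s) (hw_sum : ∑ s, w s = 1)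
    (𝒮 : Fin (n + 1) → Set (Y × X)) (h𝒮 : ∀ s, MeasurableSet (𝒮 s))
    (f : Θ → Y → X → ℝ≥0) (hf : ∀ θ, Measurable fun z : Y × X => f θ z.1 z.2)
    (θ₀ : Θ) (g₀ : X → ℝ≥0) (hg₀ : Measurable g₀)
    (hQ₀ : ∀ s, prob μ ν (𝒮 s) (f θ₀) g₀ ≠ 0 ∧ prob μ ν (𝒮 s) (f θ₀) g₀ ≠ ∞)
    (θ : Θ) (q : Fin n → ℝ) (hq : ∀ j, 0 < q j)
    (hden : ∀ x, 0 < denom ν w 𝒮 (f θ) (withOne q) x)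
    -- the expectations of the log-densities at `q` are finite
    (hfin : ∀ s, FiniteLogMean (law μ ν (𝒮 s) (f θ₀) g₀)
      (pStar μ ν w 𝒮 (f θ) (f θ₀) g₀ (withOne q) s)) :
    -- the expectations are finite at all positive parameters, so that the function below is
    -- the genuine expected log-likelihood there
    (∀ q' : Fin n → ℝ, (∀ j, 0 < q' j) → ∀ s, FiniteLogMean (law μ ν (𝒮 s) (f θ₀) g₀)
      (pStar μ ν w 𝒮 (f θ) (f θ₀) g₀ (withOne q') s)) ∧
    ∀ j : Fin n,
      (∫⁻ x, condProb ν (𝒮 j.castSucc) (f θ) x *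
        gHat μ ν w 𝒮 (f θ) (f θ₀) g₀ (withOne q) x ∂μ) ≠ ∞ ∧
      HasDerivAt
        (fun c => expectedLogLik μ ν w 𝒮 (f θ) (f θ₀) g₀ (Function.update q j c))
        ((w j.castSucc : ℝ) / q j ^ 2 *
          ((∫⁻ x, condProb ν (𝒮 j.castSucc) (f θ) x *
            gHat μ ν w 𝒮 (f θ) (f θ₀) g₀ (withOne q) x ∂μ).toReal - q j))
        (q j) ∧
      ((∫⁻ x, condProb ν (𝒮 j.castSucc) (f θ) x *
          gHat μ ν w 𝒮 (f θ) (f θ₀) g₀ (withOne q) x ∂μ) = ENNReal.ofReal (q j) →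
        HasDerivAt
          (fun c => expectedLogLik μ ν w 𝒮 (f θ) (f θ₀) g₀ (Function.update q j c))
          0 (q j)) := by
  have hP : ∀ s, IsProbabilityMeasure (law μ ν (𝒮 s) (f θ₀) g₀) := fun s =>
    isProbabilityMeasure_law (h𝒮 s) (hf θ₀) hg₀ (hQ₀ s).1 (hQ₀ s).2
  refine ⟨fun q' hq' s => (hfin s).change_param hw_pos h𝒮 (hf θ) (hf θ₀) hg₀ (withOne_pos hq)
    (withOne_pos hq') hden, fun j => ?_⟩
  have hj : withOne q j.castSucc = q j := by simp [withOne]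
  obtain ⟨h1, h2⟩ := hasDerivAt_sum_logMean_pStar hw_pos h𝒮 (hf θ) (hf θ₀) hg₀ hQ₀
    (withOne_pos hq) hden j.castSucc hfin
  have hu : ∀ c, withOne (Function.update q j c) =
      Function.update (withOne q) j.castSucc c := fun c => Fin.snoc_update _ _ _ _
  simp only [expectedLogLik, hu]
  rw [hj] at h2
  refine ⟨h1, h2, fun h => h2.congr_deriv ?_⟩
  rw [h, ENNReal.toReal_ofReal (hq j).le, sub_self, mul_zero]
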